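/- Let (R_i, R_j) be a pair of non-adjacent classes of G5 (that is, (R₁,R₄) or (R₂,R₃)), and let t₁ ∈ R_i and t₄ ∈ R_j be non-commuting. Then the Hurwitz orbit of the pair (t₁, t₄) has exactly six elements, and exactly three distinct elements of R_i (and exactly three distinct elements of R_j) appear as entries of pairs in this orbit. -/

import Mathlib

noncomputable section

open Matrix Complex

/-- The `i`-th Hurwitz move on length-`k` tuples of group elements. -/
def IsHurwitzMove {G : Type*} [Group G] {k : ℕ} (t t' : Fin k → G) : Prop :=
  ∃ i : ℕ, ∃ h : i + 1 < k,
    t' ⟨i, Nat.lt_of_succ_lt h⟩ = t ⟨i + 1, h⟩ ∧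
    t' ⟨i + 1, h⟩ = (t ⟨i + 1, h⟩)⁻¹ * t ⟨i, Nat.lt_of_succ_lt h⟩ * t ⟨i + 1, h⟩ ∧
    ∀ j : Fin k, (j : ℕ) ≠ i → (j : ℕ) ≠ i + 1 → t' j = t j

/-- Two tuples lie in the same Hurwitz orbit. -/
def SameHurwitzOrbit {G : Type*} [Group G] {k : ℕ} (t t' : Fin k → G) : Prop :=
  Relation.EqvGen IsHurwitzMove t t'

/-- A group element `r` appears (as an entry) in the Hurwitz orbit of the tuple `t`. -/
def Appears {G : Type*} [Group G] {k : ℕ} (r : G) (t : Fin k → G) : Prop :=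
  ∃ s : Fin k → G, SameHurwitzOrbit t s ∧ ∃ j, s j = r

/-- A tuple has two consecutive equal entries. -/
def HasConsecutiveEqualPair {G : Type*} [Group G] {k : ℕ} (t : Fin k → G) : Prop :=
  ∃ i : ℕ, ∃ h : i + 1 < k, t ⟨i, Nat.lt_of_succ_lt h⟩ = t ⟨i + 1, h⟩

/-- Replace the `p`-th entry of a tuple by two consecutive copies of its square. -/
def doubleAt {G : Type*} [Group G] {m : ℕ} (t : Fin m → G) (p : Fin m) : Fin (m + 1) → G :=
  fun j =>
    if h1 : (j : ℕ) < (p : ℕ) then t ⟨j, h1.trans p.isLt⟩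
    else if h2 : (j : ℕ) ≤ (p : ℕ) + 1 then (t p) ^ 2
    else t ⟨(j : ℕ) - 1, by have := j.isLt; omega⟩

/-- `ω = e^(2πi/3)`. -/
def ω : ℂ := Complex.exp (2 * Real.pi * Complex.I / 3)

def AMat : Matrix (Fin 2) (Fin 2) ℂ := !![1, 0; 0, ω]

def BMat : Matrix (Fin 2) (Fin 2) ℂ :=
  !![(ω - ω ^ 2) / 3, ω ^ 2; (-2 * ω ^ 2) / 3, (-ω - 2 * ω ^ 2) / 3]

/-- The complex reflection group G₄ as the subgroup of GL(2,ℂ) generated by `AMat`, `BMat`. -/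
def G4 : Subgroup (GL (Fin 2) ℂ) :=
  Subgroup.closure {g : GL (Fin 2) ℂ |
    (g : Matrix (Fin 2) (Fin 2) ℂ) = AMat ∨ (g : Matrix (Fin 2) (Fin 2) ℂ) = BMat}

/-- The matrix underlying an element of G₄. -/
def mat (t : G4) : Matrix (Fin 2) (Fin 2) ℂ := ((t : GL (Fin 2) ℂ) : Matrix (Fin 2) (Fin 2) ℂ)

/-- A reflection in G₄: a non-identity element with eigenvalue 1. -/
def IsReflection (t : G4) : Prop := t ≠ 1 ∧ (mat t - 1).det = 0

/-- The conjugacy class R₁ of reflections of determinant ω. -/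
def R1 : Set G4 := {t | IsReflection t ∧ (mat t).det = ω}

/-- The conjugacy class R₂ of reflections of determinant ω². -/
def R2 : Set G4 := {t | IsReflection t ∧ (mat t).det = ω ^ 2}

/-- A Coxeter element of G₄: an element with a primitive 6th root of unity as eigenvalue. -/
def IsCoxeter (c : G4) : Prop :=
  ∃ ζ : ℂ, IsPrimitiveRoot ζ 6 ∧ (mat c - ζ • (1 : Matrix (Fin 2) (Fin 2) ℂ)).det = 0

/-- The relators of G₅: a³, b³, abab(baba)⁻¹. -/
def g5Rels : Set (FreeGroup (Fin 2)) :=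
  {FreeGroup.of 0 ^ 3, FreeGroup.of 1 ^ 3,
    FreeGroup.of 0 * FreeGroup.of 1 * FreeGroup.of 0 * FreeGroup.of 1 *
      (FreeGroup.of 1 * FreeGroup.of 0 * FreeGroup.of 1 * FreeGroup.of 0)⁻¹}

/-- The complex reflection group G₅, by its presentation ⟨a,b | a³ = b³ = 1, abab = baba⟩. -/
abbrev G5 := PresentedGroup g5Rels

def ga : G5 := PresentedGroup.of 0
def gb : G5 := PresentedGroup.of 1

/-- The conjugacy class of `a` in G₅. -/
def S1 : Set G5 := {t | IsConj ga t}
/-- The conjugacy class of `b` in G₅. -/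
def S2 : Set G5 := {t | IsConj gb t}
/-- The conjugacy class of `a²` in G₅. -/
def S3 : Set G5 := {t | IsConj (ga ^ 2) t}
/-- The conjugacy class of `b²` in G₅. -/
def S4 : Set G5 := {t | IsConj (gb ^ 2) t}

/-- A reflection in G₅: a conjugate of a, b, a², or b². -/
def IsReflection5 (t : G5) : Prop := t ∈ S1 ∨ t ∈ S2 ∨ t ∈ S3 ∨ t ∈ S4

/-- A Coxeter element of G₅: an element of order 12. -/
def IsCoxeter5 (c : G5) : Prop := orderOf c = 12

section Generic
variable {G : Type*} [Group G]

theorem hm_iff (s s' : Fin 2 → G) :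
    IsHurwitzMove s s' ↔ s' = ![s 1, (s 1)⁻¹ * s 0 * s 1] := by
  constructor
  · rintro ⟨i, h, h1, h2, -⟩
    obtain rfl : i = 0 := by omega
    funext j
    fin_cases j
    · exact h1
    · exact h2
  · rintro rfl
    refine ⟨0, by omega, rfl, rfl, ?_⟩
    intro j h0 h1
    have := j.isLt
    omega

theorem hm_pair (x y : G) (s : Fin 2 → G) :
    IsHurwitzMove ![x, y] s ↔ s = ![y, y⁻¹ * x * y] := by
  rw [hm_iff]; simp

theorem hm_inj (s s' r : Fin 2 → G) (h : IsHurwitzMove s r) (h' : IsHurwitzMove s' r) :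
    s = s' := by
  rw [hm_iff] at h h'
  rw [h] at h'
  have e0 := congrFun h' 0
  have e1 := congrFun h' 1
  simp at e0 e1
  rw [e0] at e1
  simp at e1
  funext j
  fin_cases j
  · exact e1
  · exact e0

theorem generic_orbit (A B : Set G) (hA : ∀ x g, x ∈ A → g⁻¹ * x * g ∈ A)
    (hB : ∀ x g, x ∈ B → g⁻¹ * x * g ∈ B) (hd : ∀ x, x ∈ A → x ∈ B → False)
    (t c : G) (ht : t ∈ A) (hc : c ∈ B) (hn : ¬ Commute t c)
    (hp : ∀ x, (t * c) ^ 3 * x = x * (t * c) ^ 3) :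
    {s : Fin 2 → G | SameHurwitzOrbit ![t, c] s}.ncard = 6 ∧
    {r : G | r ∈ A ∧ Appears r ![t, c]}.ncard = 3 ∧
    {r : G | r ∈ B ∧ Appears r ![t, c]}.ncard = 3 := by
  obtain ⟨p, hpd⟩ : ∃ p, p = t * c := ⟨_, rfl⟩
  rw [← hpd] at hp
  obtain ⟨f, hf⟩ : ∃ f : G → G, ∀ x, f x = p⁻¹ * x * p := ⟨fun x => p⁻¹ * x * p, fun _ => rfl⟩
  have f3 : ∀ x, f (f (f x)) = x := by
    intro x
    have : f (f (f x)) = (p ^ 3)⁻¹ * (x * p ^ 3) := by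
      simp only [hf, pow_succ, pow_zero, _root_.mul_inv_rev]; group
    rw [this, ← hp]; group
  have finj : Function.Injective f := fun x y h => by
    rw [← f3 x, h, f3]
  have fmul : ∀ x y, f (x * y) = f x * f y := by
    intro x y; simp only [hf]; group
  have finv : ∀ x, f (x⁻¹) = (f x)⁻¹ := by
    intro x; simp only [hf]; group
  have m1 : c⁻¹ * t * c = f t := by rw [hf, hpd]; group
  have m2 : (f t)⁻¹ * c * f t = f c := by rw [← m1, hf, hpd]; group
  have m3 : (f c)⁻¹ * f t * f c = f (f t) := by rw [← finv, ← fmul, ← fmul, m1]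
  have m4 : (f (f t))⁻¹ * f c * f (f t) = f (f c) := by rw [← finv, ← fmul, ← fmul, m2]
  have m5 : (f (f c))⁻¹ * f (f t) * f (f c) = t := by rw [← finv, ← fmul, ← fmul, m3, f3]
  have m6 : t⁻¹ * f (f c) * t = c := by
    have := congrArg (fun x => f x) m4
    simpa only [fmul, finv, f3] using this
  have n1 : t ≠ f t := by
    intro h
    apply hn
    rw [← m1] at h
    have : c * t = c * (c⁻¹ * t * c) := by rw [← h]
    show t * c = c * t
    rw [this]; group
  have n2 : c ≠ f c := by
    intro h
    apply hn
    rw [hf, hpd] at h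
    have : t * c * c = t * c * ((t * c)⁻¹ * c * (t * c)) := by rw [← h]
    have h2 : t * c * c = c * t * c := by rw [this]; group
    exact mul_right_cancel h2
  have n1' : f t ≠ f (f t) := fun h => n1 (finj h)
  have n2' : f c ≠ f (f c) := fun h => n2 (finj h)
  have n1'' : f (f t) ≠ t := fun h => n1 (finj (finj (by rw [f3]; exact h)))
  have n2'' : f (f c) ≠ c := fun h => n2 (finj (finj (by rw [f3]; exact h)))
  have fA : ∀ x, x ∈ A → f x ∈ A := fun x hx => by rw [hf]; exact hA _ _ hx
  have fB : ∀ x, x ∈ B → f x ∈ B := fun x hx => by rw [hf]; exact hB _ _ hx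
  have ne : ∀ x y, x ∈ A → y ∈ B → x ≠ y := fun x y hx hy h => hd x hx (h ▸ hy)
  have t1 := fA _ ht
  have t2 := fA _ t1
  have c1 := fB _ hc
  have c2 := fB _ c1
  generalize f (f t) = T2 at *
  generalize f (f c) = C2 at *
  generalize f t = T1 at *
  generalize f c = C1 at *
  have e1 : IsHurwitzMove ![t, c] ![c, T1] := by rw [hm_pair, m1]
  have e2 : IsHurwitzMove ![c, T1] ![T1, C1] := by rw [hm_pair, m2]
  have e3 : IsHurwitzMove ![T1, C1] ![C1, T2] := by rw [hm_pair, m3]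
  have e4 : IsHurwitzMove ![C1, T2] ![T2, C2] := by rw [hm_pair, m4]
  have e5 : IsHurwitzMove ![T2, C2] ![C2, t] := by rw [hm_pair, m5]
  have e6 : IsHurwitzMove ![C2, t] ![t, c] := by rw [hm_pair, m6]
  obtain ⟨E, hE⟩ : ∃ E : Set (Fin 2 → G), E =
    {![t, c], ![c, T1], ![T1, C1], ![C1, T2], ![T2, C2], ![C2, t]} := ⟨_, rfl⟩
  have fwd : ∀ s s', IsHurwitzMove s s' → s ∈ E → s' ∈ E := by
    intro s s' h hs
    rw [hE] at hs ⊢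
    rcases hs with rfl | rfl | rfl | rfl | rfl | rfl <;> rw [hm_pair] at h <;> rw [h] <;>
      simp [m1, m2, m3, m4, m5, m6]
  have bwd : ∀ s s', IsHurwitzMove s s' → s' ∈ E → s ∈ E := by
    intro s s' h hs
    rw [hE] at hs ⊢
    rcases hs with rfl | rfl | rfl | rfl | rfl | rfl
    · rw [hm_inj _ _ _ h e6]; simp
    · rw [hm_inj _ _ _ h e1]; simp
    · rw [hm_inj _ _ _ h e2]; simp
    · rw [hm_inj _ _ _ h e3]; simp
    · rw [hm_inj _ _ _ h e4]; simp
    · rw [hm_inj _ _ _ h e5]; simp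
  have inv : ∀ s s', Relation.EqvGen IsHurwitzMove s s' → (s ∈ E ↔ s' ∈ E) := by
    intro s s' h
    induction h with
    | rel x y h => exact ⟨fwd _ _ h, bwd _ _ h⟩
    | refl x => rfl
    | symm x y _ ih => exact ih.symm
    | trans x y z _ _ i1 i2 => exact i1.trans i2
  have o0 : SameHurwitzOrbit ![t, c] ![t, c] := Relation.EqvGen.refl _
  have o1 : SameHurwitzOrbit ![t, c] ![c, T1] := Relation.EqvGen.trans _ _ _ o0 (.rel _ _ e1)
  have o2 : SameHurwitzOrbit ![t, c] ![T1, C1] := Relation.EqvGen.trans _ _ _ o1 (.rel _ _ e2)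
  have o3 : SameHurwitzOrbit ![t, c] ![C1, T2] := Relation.EqvGen.trans _ _ _ o2 (.rel _ _ e3)
  have o4 : SameHurwitzOrbit ![t, c] ![T2, C2] := Relation.EqvGen.trans _ _ _ o3 (.rel _ _ e4)
  have o5 : SameHurwitzOrbit ![t, c] ![C2, t] := Relation.EqvGen.trans _ _ _ o4 (.rel _ _ e5)
  have hO : ∀ s, SameHurwitzOrbit ![t, c] s ↔ s ∈ E := by
    intro s
    constructor
    · intro h
      exact (inv _ _ h).1 (by rw [hE]; simp)
    · intro hs
      rw [hE] at hs
      rcases hs with rfl | rfl | rfl | rfl | rfl | rfl <;> assumption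
  have hAp : ∀ r, Appears r ![t, c] ↔ (r = t ∨ r = T1 ∨ r = T2) ∨ (r = c ∨ r = C1 ∨ r = C2) := by
    intro r
    constructor
    · rintro ⟨s, hs, j, rfl⟩
      rw [hO, hE] at hs
      rcases hs with rfl | rfl | rfl | rfl | rfl | rfl <;> fin_cases j <;> simp
    · rintro ((rfl | rfl | rfl) | (rfl | rfl | rfl))
      · exact ⟨_, o0, 0, rfl⟩
      · exact ⟨_, o2, 0, rfl⟩
      · exact ⟨_, o4, 0, rfl⟩
      · exact ⟨_, o0, 1, rfl⟩
      · exact ⟨_, o2, 1, rfl⟩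
      · exact ⟨_, o4, 1, rfl⟩
  refine ⟨?_, ?_, ?_⟩
  · have : {s : Fin 2 → G | SameHurwitzOrbit ![t, c] s} = E := Set.ext hO
    rw [this, hE]
    have pe : ∀ x y x' y' : G, (![x, y] = ![x', y']) ↔ (x = x' ∧ y = y') := by
      intro x y x' y'
      simp
    have a1 := ne _ _ ht hc
    have a2 := ne _ _ ht c1
    have a3 := ne _ _ ht c2
    have a4 := ne _ _ t1 hc
    have a5 := ne _ _ t1 c1
    have a6 := ne _ _ t1 c2
    have a7 := ne _ _ t2 hc
    have a8 := ne _ _ t2 c1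
    have a9 := ne _ _ t2 c2
    classical
    have : ({![t, c], ![c, T1], ![T1, C1], ![C1, T2], ![T2, C2], ![C2, t]} : Set (Fin 2 → G))
      = (({![t, c], ![c, T1], ![T1, C1], ![C1, T2], ![T2, C2], ![C2, t]} : Finset (Fin 2 → G)) : Set _) := by
      simp
    rw [this, Set.ncard_coe_finset]
    repeat rw [Finset.card_insert_of_notMem
      (by simp only [Finset.mem_insert, Finset.mem_singleton, pe]; grind)]
    simp
  · have : {r : G | r ∈ A ∧ Appears r ![t, c]} = {t, T1, T2} := by
      ext r
      simp only [Set.mem_setOf_eq, hAp, Set.mem_insert_iff, Set.mem_singleton_iff]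
      constructor
      · rintro ⟨h, h1 | h1⟩
        · exact h1
        · rcases h1 with rfl | rfl | rfl <;> exact (hd _ h (by assumption)).elim
      · intro h
        refine ⟨?_, Or.inl h⟩
        rcases h with rfl | rfl | rfl <;> assumption
    rw [this, Set.ncard_eq_three]
    exact ⟨t, T1, T2, n1, n1''.symm, n1', rfl⟩
  · have : {r : G | r ∈ B ∧ Appears r ![t, c]} = {c, C1, C2} := by
      ext r
      simp only [Set.mem_setOf_eq, hAp, Set.mem_insert_iff, Set.mem_singleton_iff]
      constructor
      · rintro ⟨h, h1 | h1⟩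
        · rcases h1 with rfl | rfl | rfl <;> exact (hd _ (by assumption) h).elim
        · exact h1
      · intro h
        refine ⟨?_, Or.inr h⟩
        rcases h with rfl | rfl | rfl <;> assumption
    rw [this, Set.ncard_eq_three]
    exact ⟨c, C1, C2, n2, n2''.symm, n2', rfl⟩

end Generic

theorem ga3 : ga * ga * ga = 1 := by
  have : (PresentedGroup.mk g5Rels (FreeGroup.of 0 ^ 3)) = 1 :=
    PresentedGroup.one_of_mem (by simp [g5Rels])
  rw [map_pow, pow_succ, pow_two] at this
  exact this

theorem gb3 : gb * gb * gb = 1 := by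
  have : (PresentedGroup.mk g5Rels (FreeGroup.of 1 ^ 3)) = 1 :=
    PresentedGroup.one_of_mem (by simp [g5Rels])
  rw [map_pow, pow_succ, pow_two] at this
  exact this

theorem gab : ga * gb * ga * gb = gb * ga * gb * ga := by
  have : (PresentedGroup.mk g5Rels (FreeGroup.of 0 * FreeGroup.of 1 * FreeGroup.of 0 * FreeGroup.of 1 *
      (FreeGroup.of 1 * FreeGroup.of 0 * FreeGroup.of 1 * FreeGroup.of 0)⁻¹)) = 1 :=
    PresentedGroup.one_of_mem (by simp [g5Rels])
  rw [map_mul, map_inv, mul_inv_eq_one] at this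
  simp only [map_mul] at this
  exact this

theorem g5_ind (P : G5 → Prop) (h1 : P 1) (ha : ∀ g, P g → P (ga * g))
    (hb : ∀ g, P g → P (gb * g)) (g : G5) : P g := by
  have ia : ga⁻¹ = ga * ga := by rw [inv_eq_iff_mul_eq_one, ← mul_assoc, ga3]
  have ib : gb⁻¹ = gb * gb := by rw [inv_eq_iff_mul_eq_one, ← mul_assoc, gb3]
  obtain ⟨w, rfl⟩ := PresentedGroup.mk_surjective g5Rels g
  have key : ∀ w : FreeGroup (Fin 2), ∀ g, P g → P (PresentedGroup.mk g5Rels w * g) := by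
    intro w
    induction w using FreeGroup.induction_on with
    | C1 => intro g h; simpa using h
    | of i =>
      intro g h
      fin_cases i
      · exact ha g h
      · exact hb g h
    | inv_of i _ =>
      intro g h
      rw [map_inv]
      fin_cases i
      · change P (ga⁻¹ * g)
        rw [ia, mul_assoc]; exact ha _ (ha _ h)
      · change P (gb⁻¹ * g)
        rw [ib, mul_assoc]; exact hb _ (hb _ h)
    | mul x y hx hy =>
      intro g h
      rw [map_mul, mul_assoc]
      exact hx _ (hy _ h)
  simpa using key w 1 h1

/-- The central element. -/
def gz : G5 := ga * gb * ga * gb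

theorem gz_comm (g : G5) : gz * g = g * gz := by
  induction g using g5_ind with
  | h1 => simp
  | ha g h =>
    have : gz * ga = ga * gz := by
      unfold gz; rw [mul_assoc, mul_assoc, mul_assoc]; simp only [← mul_assoc]
      rw [mul_assoc, mul_assoc, mul_assoc]
      have := gab
      simp only [mul_assoc] at this ⊢
      rw [this]
    rw [← mul_assoc, this, mul_assoc, h, mul_assoc]
  | hb g h =>
    have : gz * gb = gb * gz := by
      unfold gz
      have := gab
      conv_lhs => rw [this]
      simp only [mul_assoc]
    rw [← mul_assoc, this, mul_assoc, h, mul_assoc]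

theorem gab' : ga * gb = gz * (gb⁻¹ * ga⁻¹) := by unfold gz; group

theorem gba' : gb * ga = gz * (ga⁻¹ * gb⁻¹) := by unfold gz; rw [gab]; group

theorem iaa : ga⁻¹ * ga⁻¹ = ga := by
  rw [← _root_.mul_inv_rev, inv_eq_iff_mul_eq_one, ga3]

theorem ibb : gb⁻¹ * gb⁻¹ = gb := by
  rw [← _root_.mul_inv_rev, inv_eq_iff_mul_eq_one, gb3]

theorem w1 : gb⁻¹ * (ga * gb * ga⁻¹) * gb = gz * gz * ga⁻¹ :=
  calc gb⁻¹ * (ga * gb * ga⁻¹) * gb = gb⁻¹ * gz * gb⁻¹ * (ga⁻¹ * ga⁻¹) * gb := by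
        rw [gab']; group
    _ = gz * (gb⁻¹ * gb⁻¹) * ga * gb := by rw [iaa, ← gz_comm]; group
    _ = gz * (gb * ga) * gb := by rw [ibb]; group
    _ = gz * gz * ga⁻¹ := by rw [gba']; group

theorem w2 : gb * (ga * gb * ga⁻¹) * gb⁻¹ = ga⁻¹ * gb * ga :=
  calc gb * (ga * gb * ga⁻¹) * gb⁻¹ = gb * gz * gb⁻¹ * (ga⁻¹ * ga⁻¹) * gb⁻¹ := by
        rw [gab']; group
    _ = gz * ga * gb⁻¹ := by rw [iaa, ← gz_comm]; group
    _ = gz * (ga⁻¹ * ga⁻¹) * gb⁻¹ := by rw [iaa]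
    _ = ga⁻¹ * gz * ga⁻¹ * gb⁻¹ := by rw [← gz_comm]; group
    _ = ga⁻¹ * (gb * ga) := by rw [gba']; group
    _ = ga⁻¹ * gb * ga := by group

theorem bconj (h : G5) : h * gb * h⁻¹ = gb ∨ h * gb * h⁻¹ = ga * gb * ga⁻¹ ∨
    h * gb * h⁻¹ = ga⁻¹ * gb * ga ∨ h * gb * h⁻¹ = gz * gz * ga⁻¹ := by
  induction h using g5_ind with
  | h1 => left; simp
  | ha g h =>
    have e : ga * g * gb * (ga * g)⁻¹ = ga * (g * gb * g⁻¹) * ga⁻¹ := by group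
    rw [e]
    rcases h with h | h | h | h <;> rw [h]
    · right; left; rfl
    · right; right; left
      calc ga * (ga * gb * ga⁻¹) * ga⁻¹ = (ga⁻¹ * ga⁻¹)⁻¹ * gb * (ga⁻¹ * ga⁻¹) := by
              simp only [_root_.mul_inv_rev, inv_inv, mul_assoc]
        _ = ga⁻¹ * gb * ga := by rw [iaa]
    · left; group
    · right; right; right
      rw [← mul_assoc ga, ← mul_assoc ga, ← gz_comm, mul_assoc gz, ← gz_comm]; group
  | hb g h =>
    have e : gb * g * gb * (gb * g)⁻¹ = gb * (g * gb * g⁻¹) * gb⁻¹ := by group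
    rw [e]
    rcases h with h | h | h | h <;> rw [h]
    · left; group
    · right; right; left
      exact w2
    · right; right; right
      rw [← w2, ← w1]
      calc gb * (gb * (ga * gb * ga⁻¹) * gb⁻¹) * gb⁻¹
          = (gb⁻¹ * gb⁻¹)⁻¹ * (ga * gb * ga⁻¹) * (gb⁻¹ * gb⁻¹) := by
            simp only [_root_.mul_inv_rev, inv_inv, mul_assoc]
        _ = _ := by rw [ibb]
    · right; left
      rw [← w1]; group

theorem p3 : (ga * gb⁻¹) ^ 3 = (gz ^ 3)⁻¹ := by
  have h : ga * gb⁻¹ = gz⁻¹ * (ga⁻¹ * gb * ga) := by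
    rw [← w2, gab', show gb * (gz * (gb⁻¹ * ga⁻¹) * ga⁻¹) * gb⁻¹ =
      (gb * gz) * gb⁻¹ * (ga⁻¹ * ga⁻¹) * gb⁻¹ by group, iaa, ← gz_comm]
    group
  have hc : Commute gz⁻¹ (ga⁻¹ * gb * ga) := Commute.inv_left (gz_comm _)
  rw [h, hc.mul_pow]
  have : (ga⁻¹ * gb * ga) ^ 3 = ga⁻¹ * (gb * gb * gb) * ga := by
    simp only [pow_succ, pow_zero]; group
  rw [this, gb3]; simp

theorem conj_pow3 (k x z : G5) (hz : ∀ g, z * g = g * z) (h : x ^ 3 = z) :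
    (k * x * k⁻¹) ^ 3 = z := by
  rw [conj_pow, h, ← hz]; group

theorem zz (g : G5) : (gz ^ 3)⁻¹ * g = g * (gz ^ 3)⁻¹ :=
  (Commute.inv_left (Commute.pow_left (gz_comm g) 3)).eq

theorem key (g h : G5) : Commute (g * ga * g⁻¹) (h * gb * h⁻¹) ∨
    ((g * ga * g⁻¹) * (h * gb⁻¹ * h⁻¹)) ^ 3 = (gz ^ 3)⁻¹ := by
  have hh : h * gb * h⁻¹ = g * ((g⁻¹ * h) * gb * (g⁻¹ * h)⁻¹) * g⁻¹ := by group
  have hh' : h * gb⁻¹ * h⁻¹ = g * ((g⁻¹ * h) * gb * (g⁻¹ * h)⁻¹)⁻¹ * g⁻¹ := by group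
  rw [hh, hh']
  rcases bconj (g⁻¹ * h) with e | e | e | e <;> rw [e]
  · right
    rw [show g * ga * g⁻¹ * (g * gb⁻¹ * g⁻¹) = g * (ga * gb⁻¹) * g⁻¹ by group]
    exact conj_pow3 _ _ _ zz p3
  · right
    rw [show g * ga * g⁻¹ * (g * (ga * gb * ga⁻¹)⁻¹ * g⁻¹)
      = (g * ga) * (ga * gb⁻¹) * (g * ga)⁻¹ by group]
    exact conj_pow3 _ _ _ zz p3
  · right
    rw [show g * ga * g⁻¹ * (g * (ga⁻¹ * gb * ga)⁻¹ * g⁻¹)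
      = (g * ga⁻¹) * (ga * gb⁻¹) * (g * ga⁻¹)⁻¹ by group]
    exact conj_pow3 _ _ _ zz p3
  · left
    have : Commute ga (gz * gz * ga⁻¹) := by
      have z : Commute ga gz := (gz_comm ga).symm
      exact (z.mul_right z).mul_right (Commute.refl ga).inv_right
    have e2 := this.eq
    show _ * _ = _ * _
    rw [show g * ga * g⁻¹ * (g * (gz * gz * ga⁻¹) * g⁻¹) = g * (ga * (gz * gz * ga⁻¹)) * g⁻¹ by
      group, e2]
    group

/-- The map to the cyclic group of order 3 sending `a` to a generator and `b` to `1`. -/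
def toC3 : G5 →* Multiplicative (ZMod 3) :=
  PresentedGroup.toGroup (rels := g5Rels)
    (f := fun i : Fin 2 => if i = 0 then Multiplicative.ofAdd (1 : ZMod 3) else 1) (by
      intro r hr
      rcases hr with rfl | rfl | rfl <;> simp <;> decide)

theorem toC3_a : toC3 ga = Multiplicative.ofAdd (1 : ZMod 3) := by
  unfold toC3 ga; rw [PresentedGroup.toGroup.of]; rfl

theorem toC3_b : toC3 gb = 1 := by
  unfold toC3 gb; rw [PresentedGroup.toGroup.of]; rfl

theorem toC3_conj {x y : G5} (h : IsConj x y) : toC3 x = toC3 y :=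
  isConj_iff_eq.1 (toC3.map_isConj h)

theorem conj_closed {G : Type*} [Group G] (a x g : G) (h : IsConj a x) :
    IsConj a (g⁻¹ * x * g) :=
  h.trans (isConj_iff.2 ⟨g⁻¹, by group⟩)

theorem g5_nonadjacent_classes_pair_orbit (Ri Rj : Set G5)
    (h : (Ri = S1 ∧ Rj = S4) ∨ (Ri = S2 ∧ Rj = S3))
    (t₁ t₄ : G5) (h₁ : t₁ ∈ Ri) (h₄ : t₄ ∈ Rj) (hcomm : ¬ Commute t₁ t₄) :
    {s : Fin 2 → G5 | SameHurwitzOrbit ![t₁, t₄] s}.ncard = 6 ∧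
    {r : G5 | r ∈ Ri ∧ Appears r ![t₁, t₄]}.ncard = 3 ∧
    {r : G5 | r ∈ Rj ∧ Appears r ![t₁, t₄]}.ncard = 3 := by
  have a2 : ga ^ 2 = ga⁻¹ := by rw [pow_two, eq_inv_iff_mul_eq_one, ga3]
  have b2 : gb ^ 2 = gb⁻¹ := by rw [pow_two, eq_inv_iff_mul_eq_one, gb3]
  rcases h with ⟨rfl, rfl⟩ | ⟨rfl, rfl⟩
  · refine generic_orbit S1 S4 (fun x g hx => conj_closed _ _ _ hx)
      (fun x g hx => conj_closed _ _ _ hx) ?_ t₁ t₄ h₁ h₄ hcomm ?_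
    · intro x h1 h2
      have e := (toC3_conj h1).trans (toC3_conj h2).symm
      rw [map_pow, toC3_a, toC3_b] at e
      revert e; decide
    · obtain ⟨g, rfl⟩ := isConj_iff.1 h₁
      obtain ⟨k, rfl⟩ := isConj_iff.1 h₄
      rw [b2] at hcomm ⊢
      rcases key g k with e | e
      · refine (hcomm ?_).elim
        have := e.inv_right
        rwa [show (k * gb * k⁻¹)⁻¹ = k * gb⁻¹ * k⁻¹ by group] at this
      · rw [e]; exact zz
  · refine generic_orbit S2 S3 (fun x g hx => conj_closed _ _ _ hx)
      (fun x g hx => conj_closed _ _ _ hx) ?_ t₁ t₄ h₁ h₄ hcomm ?_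
    · intro x h1 h2
      have e := (toC3_conj h1).trans (toC3_conj h2).symm
      rw [map_pow, toC3_a, toC3_b] at e
      revert e; decide
    · obtain ⟨k, rfl⟩ := isConj_iff.1 h₁
      obtain ⟨g, rfl⟩ := isConj_iff.1 h₄
      rw [a2] at hcomm ⊢
      rcases key g k with e | e
      · refine (hcomm ?_).elim
        have := e.symm.inv_right
        rwa [show (g * ga * g⁻¹)⁻¹ = g * ga⁻¹ * g⁻¹ by group] at this
      · rw [show k * gb * k⁻¹ * (g * ga⁻¹ * g⁻¹) = (g * ga * g⁻¹ * (k * gb⁻¹ * k⁻¹))⁻¹ by group,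
          inv_pow, e, inv_inv]
        exact fun x => (Commute.pow_left (gz_comm x) 3).eq
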